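/- A labeled planar binary tree avoids the two patterns y(*, y(*,*)) and y(*, x(*, x(*,*))) if and only if it belongs to the class N, where N and R are the least classes of trees satisfying simultaneously: leaf ∈ N; x(u, v) ∈ N for all u, v ∈ N; y(u, r) ∈ N for all u ∈ N and r ∈ R; leaf ∈ R; x(u, leaf) ∈ R for all u ∈ N; and x(u, y(v, r)) ∈ R for all u, v ∈ N and r ∈ R. -/

import Mathlib

/-- Planar binary trees with internal vertices labeled by one of two symbols `x`, `y`. -/
inductive LTree : Type
  | leaf : LTree
  | x : LTree → LTree → LTree
  | y : LTree → LTree → LTree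

namespace LTree

/-- The subtree relation. -/
inductive Subtree : LTree → LTree → Prop
  | refl (t : LTree) : Subtree t t
  | xl {s u v : LTree} : Subtree s u → Subtree s (x u v)
  | xr {s u v : LTree} : Subtree s v → Subtree s (x u v)
  | yl {s u v : LTree} : Subtree s u → Subtree s (y u v)
  | yr {s u v : LTree} : Subtree s v → Subtree s (y u v)

/-- A tree matches (at the root) one of the two forbidden patterns
`y(*, y(*,*))` and `y(*, x(*, x(*,*)))`. -/
def IsBadFlex : LTree → Prop
  | y _ (y _ _) => True
  | y _ (x _ (x _ _)) => True
  | _ => False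

/-- A tree avoids the two patterns iff no subtree matches one of them. -/
def AvoidsFlex (t : LTree) : Prop := ∀ s : LTree, Subtree s t → ¬ IsBadFlex s

mutual
  /-- The least class `N` (normal monomials of noncom-Flex), defined simultaneously
  with `RFlex`. -/
  inductive NormalFlex : LTree → Prop
    | leaf : NormalFlex LTree.leaf
    | xn {u v : LTree} : NormalFlex u → NormalFlex v → NormalFlex (LTree.x u v)
    | yn {u r : LTree} : NormalFlex u → RFlex r → NormalFlex (LTree.y u r)

  /-- The least class `R` of trees allowed as right subtrees of a `y`-root. -/
  inductive RFlex : LTree → Prop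
    | leaf : RFlex LTree.leaf
    | xleaf {u : LTree} : NormalFlex u → RFlex (LTree.x u LTree.leaf)
    | xy {u v r : LTree} : NormalFlex u → NormalFlex v → RFlex r →
        RFlex (LTree.x u (LTree.y v r))
end

end LTree

namespace LTree

theorem RFlex.normal {r : LTree} (h : RFlex r) : NormalFlex r := by
  cases h with
  | leaf => exact NormalFlex.leaf
  | xleaf hu => exact NormalFlex.xn hu NormalFlex.leaf
  | xy hu hv hr => exact NormalFlex.xn hu (NormalFlex.yn hv hr)

theorem RFlex.not_bad {u r : LTree} (h : RFlex r) : ¬ IsBadFlex (y u r) := by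
  cases h <;> simp [IsBadFlex]

theorem rflex_of_normal {u r : LTree} (h : NormalFlex r) (hb : ¬ IsBadFlex (y u r)) :
    RFlex r := by
  cases h with
  | leaf => exact RFlex.leaf
  | yn _ _ => exact absurd trivial hb
  | xn ha hc =>
    cases hc with
    | leaf => exact RFlex.xleaf ha
    | xn _ _ => exact absurd trivial hb
    | yn hv hr => exact RFlex.xy ha hv hr

theorem normal_of_avoids (t : LTree) (h : AvoidsFlex t) : NormalFlex t := by
  induction t with
  | leaf => exact NormalFlex.leaf
  | x u v ihu ihv =>
    exact NormalFlex.xn (ihu fun s hs => h s (Subtree.xl hs))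
      (ihv fun s hs => h s (Subtree.xr hs))
  | y u v ihu ihv =>
    exact NormalFlex.yn (ihu fun s hs => h s (Subtree.yl hs))
      (rflex_of_normal (ihv fun s hs => h s (Subtree.yr hs)) (h _ (Subtree.refl _)))

theorem avoids_of_normal (t : LTree) (h : NormalFlex t) : AvoidsFlex t := by
  induction t with
  | leaf =>
    intro s hs
    cases hs
    simp [IsBadFlex]
  | x u v ihu ihv =>
    cases h with
    | xn hu hv =>
      intro s hs
      cases hs with
      | refl => simp [IsBadFlex]
      | xl hs => exact ihu hu s hs
      | xr hs => exact ihv hv s hs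
  | y u v ihu ihv =>
    cases h with
    | yn hu hr =>
      intro s hs
      cases hs with
      | refl => exact hr.not_bad
      | yl hs => exact ihu hu s hs
      | yr hs => exact ihv hr.normal s hs

end LTree

open LTree in
/-- A labeled planar binary tree avoids the two patterns `y(*, y(*,*))` and
`y(*, x(*, x(*,*)))` iff it belongs to the class `N`, where `N` and `R` are the
least classes closed under the indicated constructions. -/
theorem noncomFlex_normal_forms :
    ∀ t : LTree, AvoidsFlex t ↔ NormalFlex t := by
  exact fun t => ⟨normal_of_avoids t, avoids_of_normal t⟩
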